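/- In the noetherian reduction of a smooth homomorphism A → B, the subring A₀ ⊆ A can be chosen so that A₀ → A is injective, and then the induced homomorphism B₀ → B is also injective. -/

import Mathlib

universe u
open TensorProduct

/-!
A presentation of `B` over `A`, together with a splitting that witnesses formal smoothness, involves
only finitely many coefficients, so `B` descends to a smooth algebra over a finitely generated
`R`-subalgebra of `A`. Such a subalgebra has a copy in the universe of `R`, and is noetherian when
`R` is. Smooth algebras are flat, so `B₀ → A ⊗[A₀] B₀`, the base change of the injection `A₀ → A`
along `A₀ → B₀`, is injective.
-/

universe v w

section BaseChange

variable (R S A : Type*) {B : Type*} [CommRing R] [CommRing S] [CommRing A] [CommRing B]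
  [Algebra R S] [Algebra R A] [Algebra S A] [IsScalarTower R S A] [Algebra R B]

/-- Cancellation of an intermediate base change, `A ⊗[S] (S ⊗[R] B) ≃ₐ[A] A ⊗[R] B`, where
`S ⊗[R] B` is replaced by its copy in a smaller universe. -/
noncomputable def tensorShrinkBaseChangeEquiv [Small.{w} (S ⊗[R] B)] :
    A ⊗[S] Shrink.{w} (S ⊗[R] B) ≃ₐ[A] A ⊗[R] B :=
  (Algebra.TensorProduct.congr .refl (Shrink.algEquiv S (S ⊗[R] B))).trans
    (Algebra.TensorProduct.cancelBaseChange R S A A B)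

end BaseChange

theorem exists_smooth_finiteType_model (R : Type w) (A : Type u) (B : Type v) [CommRing R]
    [CommRing A] [CommRing B] [Algebra R A] [Algebra A B] [Algebra.Smooth A B] :
    ∃ (A₀ B₀ : Type w) (_ : CommRing A₀) (_ : CommRing B₀) (_ : Algebra R A₀)
      (_ : Algebra A₀ B₀) (_ : Algebra A₀ A),
      IsScalarTower R A₀ A ∧ Algebra.FiniteType R A₀ ∧ Algebra.Smooth A₀ B₀ ∧
      Function.Injective (algebraMap A₀ A) ∧ Nonempty ((A ⊗[A₀] B₀) ≃ₐ[A] B) := by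
  obtain ⟨A₁, B₁, _, _, hfg, _, ⟨e⟩⟩ := Algebra.Smooth.exists_subalgebra_fg R A B
  have : Algebra.FiniteType R A₁ := A₁.fg_iff_finiteType.mp hfg
  have : Small.{w} A₁ := Algebra.FiniteType.small (R := R)
  let A₀ := Shrink.{w} A₁
  let f : A₀ ≃ₐ[R] A₁ := Shrink.algEquiv R A₁
  let : Algebra A₀ A := (A₁.val.comp f.toAlgHom).toAlgebra
  have : IsScalarTower R A₀ A := .of_algHom (A₁.val.comp f.toAlgHom)
  have : IsScalarTower A₁ A₀ A :=
    .of_algebraMap_eq fun a ↦ congrArg Subtype.val (f.apply_symm_apply a).symm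
  have : Small.{w} (A₀ ⊗[A₁] B₁) := Algebra.FiniteType.small (R := A₀)
  exact ⟨A₀, Shrink (A₀ ⊗[A₁] B₁), inferInstance, inferInstance, inferInstance, inferInstance,
    inferInstance, inferInstance, .equiv inferInstance f.symm,
    .of_equiv (Shrink.algEquiv A₀ (A₀ ⊗[A₁] B₁)).symm, Subtype.val_injective.comp f.injective,
    ⟨(tensorShrinkBaseChangeEquiv A₁ A₀ A).trans e.symm⟩⟩

theorem stmt_6_general (R : Type w) (A : Type u) (B : Type v) [CommRing R] [IsNoetherianRing R]
    [CommRing A] [CommRing B] [Algebra R A] [Algebra A B] [Algebra.Smooth A B] :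
    ∃ (A₀ B₀ : Type w) (_ : CommRing A₀) (_ : CommRing B₀) (_ : Algebra R A₀)
      (_ : Algebra A₀ B₀) (_ : Algebra A₀ A),
      IsScalarTower R A₀ A ∧ Algebra.FiniteType R A₀ ∧
      IsNoetherianRing A₀ ∧ IsNoetherianRing B₀ ∧ Algebra.Smooth A₀ B₀ ∧
      Function.Injective (algebraMap A₀ A) ∧
      ∃ e : (A ⊗[A₀] B₀) ≃ₐ[A] B,
        Function.Injective (fun b₀ : B₀ => e ((1 : A) ⊗ₜ[A₀] b₀)) := by
  obtain ⟨A₀, B₀, _, _, _, _, _, htower, hfin, hsmooth, hinj, ⟨e⟩⟩ :=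
    exists_smooth_finiteType_model R A B
  have hA₀ : IsNoetherianRing A₀ := Algebra.FiniteType.isNoetherianRing R A₀
  have hB₀ : IsNoetherianRing B₀ := Algebra.FiniteType.isNoetherianRing A₀ B₀
  have hflat : Module.Flat A₀ B₀ := inferInstance
  exact ⟨A₀, B₀, inferInstance, inferInstance, inferInstance, inferInstance, inferInstance,
    htower, hfin, hA₀, hB₀, hsmooth, hinj, e,
    e.injective.comp (Algebra.TensorProduct.includeRight_injective hinj)⟩

theorem stmt_6 {A B : Type u} [CommRing A] [CommRing B] [Algebra A B]
    [Algebra.FormallySmooth A B] [Algebra.FinitePresentation A B] :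
    ∃ (A₀ B₀ : Type) (_ : CommRing A₀) (_ : CommRing B₀) (_ : Algebra A₀ B₀)
      (_ : Algebra A₀ A),
      IsNoetherianRing A₀ ∧ IsNoetherianRing B₀ ∧
      Algebra.FormallySmooth A₀ B₀ ∧ Algebra.FinitePresentation A₀ B₀ ∧
      Function.Injective (algebraMap A₀ A) ∧
      ∃ e : (A ⊗[A₀] B₀) ≃ₐ[A] B,
        Function.Injective (fun b₀ : B₀ => e ((1 : A) ⊗ₜ[A₀] b₀)) := by
  have : Algebra.Smooth A B := {}
  obtain ⟨A₀, B₀, _, _, _, _, _, -, -, hA₀, hB₀, hsmooth, hinj, he⟩ := stmt_6_general ℤ A B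
  exact ⟨A₀, B₀, _, _, _, _, hA₀, hB₀, hsmooth.formallySmooth,
    hsmooth.finitePresentation, hinj, he⟩
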